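/- arXiv:1505.00403 — 5 statements merged into one kernel-verified Lean document; each statement's English description precedes it below -/
import Mathlib

section
/- Let g be a Lie 2-algebra over a field F. If (X₀,X₁,l_X) and (Y₀,Y₁,l_Y) are derivations of degree 0 of g, then so is ([X₀,Y₀], [X₁,Y₁], L_X l_Y − L_Y l_X), where [X₀,Y₀] = X₀Y₀ − Y₀X₀, [X₁,Y₁] = X₁Y₁ − Y₁X₁. That is, the bracket {(X,l_X),(Y,l_Y)} := ([X,Y]_C, L_X l_Y − L_Y l_X) is closed on degree-0 derivations. -/
open LinearMap

/-- A (semistrict) Lie 2-algebra `g = (g₀ ⊕ g₋₁, d, [·,·], l₃)` over a field `F`: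
a linear map `d : g₋₁ → g₀`, a skew-symmetric bracket `b0` on `g₀`, a mixed
bracket `b1 : g₀ × g₋₁ → g₋₁` (with `[a,x] := -[x,a]`), and an alternating
trilinear `l3 : g₀³ → g₋₁` satisfying axioms (a), (b), (c). -/
structure LieTwoAlg (F : Type*) [Field F] (g0 gm : Type*)
    [AddCommGroup g0] [Module F g0] [AddCommGroup gm] [Module F gm] where
  d : gm →ₗ[F] g0
  b0 : g0 →ₗ[F] g0 →ₗ[F] g0
  b1 : g0 →ₗ[F] gm →ₗ[F] gm
  l3 : g0 →ₗ[F] g0 →ₗ[F] g0 →ₗ[F] gm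
  b0_skew : ∀ x y, b0 x y = - b0 y x
  l3_alt₁ : ∀ x y, l3 x x y = 0
  l3_alt₂ : ∀ x y, l3 x y y = 0
  ax_a1 : ∀ x a, d (b1 x a) = b0 x (d a)
  ax_a2 : ∀ a b, b1 (d a) b = - b1 (d b) a
  ax_b1 : ∀ x y z, b0 (b0 x y) z + b0 (b0 y z) x + b0 (b0 z x) y = - d (l3 x y z)
  ax_b2 : ∀ x y a, b1 (b0 x y) a - b1 x (b1 y a) + b1 y (b1 x a) = - l3 x y (d a)
  ax_c : ∀ x y z w,
    l3 (b0 x y) z w + l3 (b0 y z) w x + l3 (b0 z w) x y + l3 (b0 w x) y z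
      = -(b1 w (l3 x y z) + b1 x (l3 y z w) + b1 y (l3 z w x) + b1 z (l3 w x y))

/-- A derivation of degree 0 of the (raw) Lie 2-algebra data `(d, b0, b1, l3)`:
a triple `(X0, X1, lX)` with `X0 ∘ d = d ∘ X1` and `lX` alternating bilinear,
satisfying conditions (a), (b), (c) of Definition 3.2. -/
structure IsDer0 {F : Type*} [Field F] {g0 gm : Type*}
    [AddCommGroup g0] [Module F g0] [AddCommGroup gm] [Module F gm]
    (d : gm →ₗ[F] g0) (b0 : g0 →ₗ[F] g0 →ₗ[F] g0) (b1 : g0 →ₗ[F] gm →ₗ[F] gm)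
    (l3 : g0 →ₗ[F] g0 →ₗ[F] g0 →ₗ[F] gm)
    (X0 : g0 →ₗ[F] g0) (X1 : gm →ₗ[F] gm) (lX : g0 →ₗ[F] g0 →ₗ[F] gm) : Prop where
  comm : X0 ∘ₗ d = d ∘ₗ X1
  alt : ∀ x, lX x x = 0
  der_a : ∀ x y, d (lX x y) = X0 (b0 x y) - b0 (X0 x) y - b0 x (X0 y)
  der_b : ∀ x a, lX x (d a) = X1 (b1 x a) - b1 (X0 x) a - b1 x (X1 a)
  der_c : ∀ x y z, X1 (l3 x y z) =
      lX x (b0 y z) + lX y (b0 z x) + lX z (b0 x y)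
      + b1 x (lX y z) + b1 y (lX z x) + b1 z (lX x y)
      + l3 (X0 x) y z + l3 (X0 y) z x + l3 (X0 z) x y

/-- `(L_X ω)(x,y) = X₁(ω(x,y)) − ω(X₀x,y) − ω(x,X₀y)`. -/
def Lop {F : Type*} [Field F] {g0 gm : Type*}
    [AddCommGroup g0] [Module F g0] [AddCommGroup gm] [Module F gm]
    (X0 : g0 →ₗ[F] g0) (X1 : gm →ₗ[F] gm) (ω : g0 →ₗ[F] g0 →ₗ[F] gm) :
    g0 →ₗ[F] g0 →ₗ[F] gm :=
  ω.compr₂ X1 - ω ∘ₗ X0 - ω.compl₂ X0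

/-- `l_{δ(Θ)}(x,y) = Θ[x,y] − [x,Θy] − [Θx,y]`. -/
def ldelta {F : Type*} [Field F] {g0 gm : Type*}
    [AddCommGroup g0] [Module F g0] [AddCommGroup gm] [Module F gm]
    (G : LieTwoAlg F g0 gm) (Θ : g0 →ₗ[F] gm) : g0 →ₗ[F] g0 →ₗ[F] gm :=
  G.b0.compr₂ Θ - G.b1.compl₂ Θ + (G.b1.compl₂ Θ).flip

/-!
The defining conditions of a degree-0 derivation say how `X = (X₀, X₁)` acts on the structure
maps. Let `End g₀ × End g₋₁` act on all spaces of multilinear maps between `g₀` and `g₋₁`, so that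
`L_X ω = ⁅X, ω⁆`. Then `(X, ω)` is a derivation exactly when `ω` is alternating, `⁅X, d⁆ = 0`,
`⁅X, b₀⁆ = d ∘ ω`, `⁅X, b₁⁆ = ω(·, d ·)` and `⁅X, l₃⁆ = δω`, where `δ` is the cyclic sum of
`ω(x, [y, z]) + [x, ω(y, z)]`. The Jacobi identity `⁅⁅X, Y⁆, T⁆ = ⁅X, ⁅Y, T⁆⁆ - ⁅Y, ⁅X, T⁆⁆` reduces
closure to computing `⁅X, -⁆` on the right-hand sides by the Leibniz rule. Only `l₃` produces a
cross term: `δ` depends on the brackets, and its variation along `X`, applied to `η`, is symmetric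
in `ω` and `η`, so it cancels in the commutator.
-/

section LieAction

variable {R L U V W M P : Type*} [CommRing R] [LieRing L] [LieAlgebra R L]
  [AddCommGroup U] [Module R U] [LieRingModule L U] [LieModule R L U]
  [AddCommGroup V] [Module R V] [LieRingModule L V] [LieModule R L V]
  [AddCommGroup W] [Module R W] [LieRingModule L W] [LieModule R L W]
  [AddCommGroup M] [Module R M] [LieRingModule L M] [LieModule R L M]
  [AddCommGroup P] [Module R P] [LieRingModule L P] [LieModule R L P]

theorem lie_compr₂ (X : L) (f : U →ₗ[R] V →ₗ[R] M) (g : M →ₗ[R] P) :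
    ⁅X, f.compr₂ g⁆ = ⁅X, f⁆.compr₂ g + f.compr₂ ⁅X, g⁆ := by
  ext u v
  simp only [LieHom.lie_apply, compr₂_apply, LinearMap.add_apply, LinearMap.sub_apply, map_sub]
  abel

theorem lie_compl₂ (X : L) (f : U →ₗ[R] M →ₗ[R] P) (g : V →ₗ[R] M) :
    ⁅X, f.compl₂ g⁆ = ⁅X, f⁆.compl₂ g + f.compl₂ ⁅X, g⁆ := by
  ext u v
  simp only [LieHom.lie_apply, compl₂_apply, LinearMap.add_apply, LinearMap.sub_apply, map_sub]
  abel

theorem isAlt_lie {f : V →ₗ[R] V →ₗ[R] M} (hf : f.IsAlt) (X : L) : (⁅X, f⁆).IsAlt := by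
  intro v
  simp only [LieHom.lie_apply, LinearMap.sub_apply, hf v, lie_zero, ← hf.neg v ⁅X, v⁆]
  abel

/-- The composition `(u, v, w) ↦ f u (g v w)`, the building block of the coboundary operator. -/
def bilinInsert (f : U →ₗ[R] M →ₗ[R] P) (g : V →ₗ[R] W →ₗ[R] M) :
    U →ₗ[R] V →ₗ[R] W →ₗ[R] P where
  toFun u := g.compr₂ (f u)
  map_add' _ _ := by ext; simp
  map_smul' _ _ := by ext; simp

@[simp]
theorem bilinInsert_apply (f : U →ₗ[R] M →ₗ[R] P) (g : V →ₗ[R] W →ₗ[R] M)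
    (u : U) (v : V) (w : W) :
    bilinInsert f g u v w = f u (g v w) :=
  rfl

theorem lie_bilinInsert (X : L) (f : U →ₗ[R] M →ₗ[R] P) (g : V →ₗ[R] W →ₗ[R] M) :
    ⁅X, bilinInsert f g⁆ = bilinInsert ⁅X, f⁆ g + bilinInsert f ⁅X, g⁆ := by
  ext u v w
  simp only [LieHom.lie_apply, bilinInsert_apply, LinearMap.add_apply, LinearMap.sub_apply, map_sub]
  abel

/-- The sum of a trilinear map over the cyclic permutations of its arguments, the paper's
`c.p.(x, y, z)`. -/
def cyclicSum (T : V →ₗ[R] V →ₗ[R] V →ₗ[R] P) : V →ₗ[R] V →ₗ[R] V →ₗ[R] P :=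
  T + (lflip.toLinearMap ∘ₗ T).flip + lflip.toLinearMap ∘ₗ T.flip

@[simp]
theorem cyclicSum_apply (T : V →ₗ[R] V →ₗ[R] V →ₗ[R] P) (x y z : V) :
    cyclicSum T x y z = T x y z + T y z x + T z x y :=
  rfl

theorem lie_cyclicSum (X : L) (T : V →ₗ[R] V →ₗ[R] V →ₗ[R] P) :
    ⁅X, cyclicSum T⁆ = cyclicSum ⁅X, T⁆ := by
  ext x y z
  simp only [LieHom.lie_apply, cyclicSum_apply, LinearMap.sub_apply, lie_add]
  abel

/-- The coboundary `δω` of a `W`-valued 2-cochain `ω` on `V`, for the bracket `b0` and the action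
`b1`: the `ω`-terms of condition (c) on derivations. It is defined for arbitrary bilinear `b0` and
`b1`, so that they can be replaced by their variations under a Lie action. -/
def coboundary (b0 : V →ₗ[R] V →ₗ[R] V) (b1 : V →ₗ[R] W →ₗ[R] W) (ω : V →ₗ[R] V →ₗ[R] W) :
    V →ₗ[R] V →ₗ[R] V →ₗ[R] W :=
  cyclicSum (bilinInsert ω b0 + bilinInsert b1 ω)

theorem coboundary_sub (b0 : V →ₗ[R] V →ₗ[R] V) (b1 : V →ₗ[R] W →ₗ[R] W)
    (ω η : V →ₗ[R] V →ₗ[R] W) :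
    coboundary b0 b1 (ω - η) = coboundary b0 b1 ω - coboundary b0 b1 η := by
  ext x y z
  simp only [coboundary, cyclicSum_apply, bilinInsert_apply, LinearMap.add_apply,
    LinearMap.sub_apply, map_sub]
  abel

set_option maxSynthPendingDepth 3 in
theorem lie_coboundary (X : L) (b0 : V →ₗ[R] V →ₗ[R] V) (b1 : V →ₗ[R] W →ₗ[R] W)
    (ω : V →ₗ[R] V →ₗ[R] W) :
    ⁅X, coboundary b0 b1 ω⁆ = coboundary b0 b1 ⁅X, ω⁆ + coboundary ⁅X, b0⁆ ⁅X, b1⁆ ω := by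
  simp only [coboundary, lie_cyclicSum, lie_add, lie_bilinInsert]
  ext x y z
  simp only [cyclicSum_apply, LinearMap.add_apply]
  abel

theorem coboundary_comp_comm (d : W →ₗ[R] V) (ω η : V →ₗ[R] V →ₗ[R] W) :
    coboundary (ω.compr₂ d) (ω.compl₂ d) η = coboundary (η.compr₂ d) (η.compl₂ d) ω :=
  congrArg cyclicSum (add_comm (bilinInsert η (ω.compr₂ d)) (bilinInsert ω (η.compr₂ d)))

/-- The pair `(X, ω)` is a degree-0 derivation of the data `(d, b0, b1, l3)`, for `X` in a Lie
algebra acting on `V` and `W`: each condition on the pair prescribes the action of `X` on one of the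
structure maps. -/
structure IsLieDer0 (d : W →ₗ[R] V) (b0 : V →ₗ[R] V →ₗ[R] V) (b1 : V →ₗ[R] W →ₗ[R] W)
    (l3 : V →ₗ[R] V →ₗ[R] V →ₗ[R] W) (X : L) (ω : V →ₗ[R] V →ₗ[R] W) : Prop where
  isAlt : ω.IsAlt
  lie_d : ⁅X, d⁆ = 0
  lie_b0 : ⁅X, b0⁆ = ω.compr₂ d
  lie_b1 : ⁅X, b1⁆ = ω.compl₂ d
  lie_l3 : ⁅X, l3⁆ = coboundary b0 b1 ω

namespace IsLieDer0

variable {d : W →ₗ[R] V} {b0 : V →ₗ[R] V →ₗ[R] V} {b1 : V →ₗ[R] W →ₗ[R] W}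
  {l3 : V →ₗ[R] V →ₗ[R] V →ₗ[R] W} {X Y : L} {ω η : V →ₗ[R] V →ₗ[R] W}

theorem lie_compr₂ (hX : IsLieDer0 d b0 b1 l3 X ω) (θ : V →ₗ[R] V →ₗ[R] W) :
    ⁅X, θ.compr₂ d⁆ = ⁅X, θ⁆.compr₂ d := by
  rw [_root_.lie_compr₂, hX.lie_d]
  ext
  simp

theorem lie_compl₂ (hX : IsLieDer0 d b0 b1 l3 X ω) (θ : V →ₗ[R] V →ₗ[R] W) :
    ⁅X, θ.compl₂ d⁆ = ⁅X, θ⁆.compl₂ d := by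
  rw [_root_.lie_compl₂, hX.lie_d]
  ext
  simp

theorem lie_coboundary (hX : IsLieDer0 d b0 b1 l3 X ω) (θ : V →ₗ[R] V →ₗ[R] W) :
    ⁅X, coboundary b0 b1 θ⁆
      = coboundary b0 b1 ⁅X, θ⁆ + coboundary (ω.compr₂ d) (ω.compl₂ d) θ := by
  rw [_root_.lie_coboundary, hX.lie_b0, hX.lie_b1]

set_option maxSynthPendingDepth 3 in
theorem lie (hX : IsLieDer0 d b0 b1 l3 X ω) (hY : IsLieDer0 d b0 b1 l3 Y η) :
    IsLieDer0 d b0 b1 l3 ⁅X, Y⁆ (⁅X, η⁆ - ⁅Y, ω⁆) where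
  isAlt v := by
    rw [LinearMap.sub_apply, LinearMap.sub_apply, isAlt_lie hY.isAlt X v, isAlt_lie hX.isAlt Y v,
      sub_zero]
  lie_d := by rw [lie_lie, hX.lie_d, hY.lie_d, lie_zero, lie_zero, sub_zero]
  lie_b0 := by
    rw [lie_lie, hX.lie_b0, hY.lie_b0, hX.lie_compr₂, hY.lie_compr₂]
    ext x y
    simp
  lie_b1 := by
    rw [lie_lie, hX.lie_b1, hY.lie_b1, hX.lie_compl₂, hY.lie_compl₂]
    ext x a
    simp
  lie_l3 := by
    rw [lie_lie, hX.lie_l3, hY.lie_l3, hX.lie_coboundary, hY.lie_coboundary,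
      coboundary_comp_comm, coboundary_sub, add_sub_add_right_eq_sub]

end IsLieDer0

end LieAction

section EndProd

variable {R V W : Type*} [CommRing R] [AddCommGroup V] [Module R V] [AddCommGroup W] [Module R W]

attribute [local instance] LieRing.ofAssociativeRing

local instance : LieRingModule (Module.End R V × Module.End R W) V :=
  LieRingModule.compLieHom V (LieHom.fst R (Module.End R V) (Module.End R W))

local instance : LieModule R (Module.End R V × Module.End R W) V :=
  LieModule.compLieHom V (LieHom.fst R (Module.End R V) (Module.End R W))

local instance : LieRingModule (Module.End R V × Module.End R W) W :=
  LieRingModule.compLieHom W (LieHom.snd R (Module.End R V) (Module.End R W))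

local instance : LieModule R (Module.End R V × Module.End R W) W :=
  LieModule.compLieHom W (LieHom.snd R (Module.End R V) (Module.End R W))

theorem endProd_lie_fst (X : Module.End R V × Module.End R W) (x : V) : ⁅X, x⁆ = X.1 x :=
  rfl

theorem endProd_lie_snd (X : Module.End R V × Module.End R W) (a : W) : ⁅X, a⁆ = X.2 a :=
  rfl

theorem endProd_lie_eq_zero_iff {d : W →ₗ[R] V} {X₀ : V →ₗ[R] V} {X₁ : W →ₗ[R] W} :
    ⁅((X₀, X₁) : Module.End R V × Module.End R W), d⁆ = 0 ↔ X₀ ∘ₗ d = d ∘ₗ X₁ :=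
  sub_eq_zero (a := X₀ ∘ₗ d) (b := d ∘ₗ X₁)

theorem endProd_lie_eq_compr₂_iff {d : W →ₗ[R] V} {b0 : V →ₗ[R] V →ₗ[R] V}
    {X₀ : V →ₗ[R] V} {X₁ : W →ₗ[R] W} {ω : V →ₗ[R] V →ₗ[R] W} :
    ⁅((X₀, X₁) : Module.End R V × Module.End R W), b0⁆ = ω.compr₂ d ↔
      ∀ x y, d (ω x y) = X₀ (b0 x y) - b0 (X₀ x) y - b0 x (X₀ y) := by
  simp only [LinearMap.ext_iff, LieHom.lie_apply, LinearMap.sub_apply, compr₂_apply,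
    endProd_lie_fst, sub_right_comm, eq_comm]

theorem endProd_lie_eq_compl₂_iff {d : W →ₗ[R] V} {b1 : V →ₗ[R] W →ₗ[R] W}
    {X₀ : V →ₗ[R] V} {X₁ : W →ₗ[R] W} {ω : V →ₗ[R] V →ₗ[R] W} :
    ⁅((X₀, X₁) : Module.End R V × Module.End R W), b1⁆ = ω.compl₂ d ↔
      ∀ x a, ω x (d a) = X₁ (b1 x a) - b1 (X₀ x) a - b1 x (X₁ a) := by
  simp only [LinearMap.ext_iff, LieHom.lie_apply, LinearMap.sub_apply, compl₂_apply,
    endProd_lie_fst, endProd_lie_snd, sub_right_comm, eq_comm]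

theorem endProd_lie_eq_coboundary_iff {b0 : V →ₗ[R] V →ₗ[R] V} {b1 : V →ₗ[R] W →ₗ[R] W}
    {l3 : V →ₗ[R] V →ₗ[R] V →ₗ[R] W} (hl3 : ∀ x y z, l3 x y z = l3 y z x)
    {X₀ : V →ₗ[R] V} {X₁ : W →ₗ[R] W} {ω : V →ₗ[R] V →ₗ[R] W} :
    ⁅((X₀, X₁) : Module.End R V × Module.End R W), l3⁆ = coboundary b0 b1 ω ↔
      ∀ x y z, X₁ (l3 x y z) =
        ω x (b0 y z) + ω y (b0 z x) + ω z (b0 x y)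
        + b1 x (ω y z) + b1 y (ω z x) + b1 z (ω x y)
        + l3 (X₀ x) y z + l3 (X₀ y) z x + l3 (X₀ z) x y := by
  have lie_l3_apply (x y z : V) : ⁅((X₀, X₁) : Module.End R V × Module.End R W), l3⁆ x y z =
      X₁ (l3 x y z) - (l3 (X₀ x) y z + l3 (X₀ y) z x + l3 (X₀ z) x y) := by
    simp only [LieHom.lie_apply, LinearMap.sub_apply, endProd_lie_fst, endProd_lie_snd,
      hl3 x (X₀ y) z, ← hl3 (X₀ z) x y]
    abel
  simp only [LinearMap.ext_iff, lie_l3_apply, coboundary, cyclicSum_apply, LinearMap.add_apply,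
    bilinInsert_apply, sub_eq_iff_eq_add]
  refine forall₃_congr fun x y z => ?_
  rw [iff_iff_eq]
  congr 1
  abel

variable {F g0 gm : Type*} [Field F] [AddCommGroup g0] [Module F g0]
  [AddCommGroup gm] [Module F gm]

theorem lop_eq_lie (X0 : g0 →ₗ[F] g0) (X1 : gm →ₗ[F] gm) (ω : g0 →ₗ[F] g0 →ₗ[F] gm) :
    Lop X0 X1 ω = ⁅((X0, X1) : Module.End F g0 × Module.End F gm), ω⁆ := by
  ext x y
  simp only [Lop, LieHom.lie_apply, LinearMap.sub_apply, compr₂_apply, comp_apply, compl₂_apply,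
    endProd_lie_fst, endProd_lie_snd]
  abel

theorem isDer0_iff_isLieDer0 {d : gm →ₗ[F] g0} {b0 : g0 →ₗ[F] g0 →ₗ[F] g0}
    {b1 : g0 →ₗ[F] gm →ₗ[F] gm} {l3 : g0 →ₗ[F] g0 →ₗ[F] g0 →ₗ[F] gm}
    (hl3 : ∀ x y z, l3 x y z = l3 y z x) {X0 : g0 →ₗ[F] g0} {X1 : gm →ₗ[F] gm}
    {ω : g0 →ₗ[F] g0 →ₗ[F] gm} :
    IsDer0 d b0 b1 l3 X0 X1 ω ↔
      IsLieDer0 d b0 b1 l3 ((X0, X1) : Module.End F g0 × Module.End F gm) ω where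
  mp h := ⟨h.alt, endProd_lie_eq_zero_iff.2 h.comm, endProd_lie_eq_compr₂_iff.2 h.der_a,
    endProd_lie_eq_compl₂_iff.2 h.der_b, (endProd_lie_eq_coboundary_iff hl3).2 h.der_c⟩
  mpr h := ⟨endProd_lie_eq_zero_iff.1 h.lie_d, h.isAlt, endProd_lie_eq_compr₂_iff.1 h.lie_b0,
    endProd_lie_eq_compl₂_iff.1 h.lie_b1, (endProd_lie_eq_coboundary_iff hl3).1 h.lie_l3⟩

theorem bracket_of_der0_is_der0_general {d : gm →ₗ[F] g0} {b0 : g0 →ₗ[F] g0 →ₗ[F] g0}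
    {b1 : g0 →ₗ[F] gm →ₗ[F] gm} {l3 : g0 →ₗ[F] g0 →ₗ[F] g0 →ₗ[F] gm}
    (hl3 : ∀ x y z, l3 x y z = l3 y z x)
    {X0 Y0 : g0 →ₗ[F] g0} {X1 Y1 : gm →ₗ[F] gm} {lX lY : g0 →ₗ[F] g0 →ₗ[F] gm}
    (hX : IsDer0 d b0 b1 l3 X0 X1 lX) (hY : IsDer0 d b0 b1 l3 Y0 Y1 lY) :
    IsDer0 d b0 b1 l3 (X0 ∘ₗ Y0 - Y0 ∘ₗ X0) (X1 ∘ₗ Y1 - Y1 ∘ₗ X1)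
      (Lop X0 X1 lY - Lop Y0 Y1 lX) := by
  rw [isDer0_iff_isLieDer0 hl3] at hX hY ⊢
  rw [lop_eq_lie, lop_eq_lie]
  exact hX.lie hY

end EndProd

theorem LieTwoAlg.l3_cyclic {F g0 gm : Type*} [Field F] [AddCommGroup g0] [Module F g0]
    [AddCommGroup gm] [Module F gm] (G : LieTwoAlg F g0 gm) (x y z : g0) :
    G.l3 x y z = G.l3 y z x := by
  have swap_left : -G.l3 x y = G.l3 y x :=
    IsAlt.neg (B := G.l3) (fun u => LinearMap.ext (G.l3_alt₁ u)) x y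
  have swap_right : -G.l3 y x z = G.l3 y z x := IsAlt.neg (B := G.l3 y) (G.l3_alt₂ y) x z
  rw [← swap_right, ← swap_left, LinearMap.neg_apply, neg_neg]

/-- the bracket `{(X,l_X),(Y,l_Y)} = ([X,Y]_C, L_X l_Y − L_Y l_X)` is
closed on degree-0 derivations of a Lie 2-algebra. -/
theorem bracket_of_der0_is_der0
    {F : Type*} [Field F] {g0 gm : Type*}
    [AddCommGroup g0] [Module F g0] [AddCommGroup gm] [Module F gm]
    (G : LieTwoAlg F g0 gm)
    (X0 : g0 →ₗ[F] g0) (X1 : gm →ₗ[F] gm) (lX : g0 →ₗ[F] g0 →ₗ[F] gm)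
    (Y0 : g0 →ₗ[F] g0) (Y1 : gm →ₗ[F] gm) (lY : g0 →ₗ[F] g0 →ₗ[F] gm)
    (hX : IsDer0 G.d G.b0 G.b1 G.l3 X0 X1 lX)
    (hY : IsDer0 G.d G.b0 G.b1 G.l3 Y0 Y1 lY) :
    IsDer0 G.d G.b0 G.b1 G.l3
      (X0 ∘ₗ Y0 - Y0 ∘ₗ X0) (X1 ∘ₗ Y1 - Y1 ∘ₗ X1)
      (Lop X0 X1 lY - Lop Y0 Y1 lX) :=
  bracket_of_der0_is_der0_general G.l3_cyclic hX hY
end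

section
/- Let g be a Lie 2-algebra over a field F. (1) For all Θ, Θ′ ∈ Hom(g₀,g₋₁), d̄({Θ,Θ′}) = {d̄(Θ), d̄(Θ′)}, where {Θ,Θ′} := Θ∘d∘Θ′ − Θ′∘d∘Θ and the right-hand bracket of degree-0 derivations is {(X,l_X),(Y,l_Y)} = ([X,Y]_C, L_X l_Y − L_Y l_X); explicitly, besides the commutator identities this asserts l_{δ(Θ∘d∘Θ′ − Θ′∘d∘Θ)} = L_{δ(Θ)} l_{δ(Θ′)} − L_{δ(Θ′)} l_{δ(Θ)}. (2) For every derivation of degree 0 (X₀,X₁,l_X) of g and every Θ ∈ Hom(g₀,g₋₁), d̄(X₁∘Θ − Θ∘X₀) = {(X,l_X), d̄(Θ)}; explicitly, d∘(X₁∘Θ − Θ∘X₀) = [X₀, d∘Θ], (X₁∘Θ − Θ∘X₀)∘d = [X₁, Θ∘d], and l_{δ(X₁∘Θ − Θ∘X₀)} = L_X l_{δ(Θ)} − L_{δ(Θ)} l_X. -/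
open LinearMap

/-!
Part (1) is part (2) for `X = d̄(Θ)`: there `X₁ = Θ ∘ d` and `X₀ = d ∘ Θ`, so that
`X₁ ∘ Θ' - Θ' ∘ X₀ = {Θ, Θ'}`. For part (2), condition (a) expands the term `Θ (d (l_X(x, y)))` of
`L_{δ(Θ)} l_X`, and condition (b) the terms `l_X(x, d (Θ y))` and `l_X(d (Θ x), y)`. To cover
`d̄(Θ)` in every characteristic, `l_X` is taken skew-symmetric instead of alternating:
`l_{δ(Θ)}(x, x) = Θ[x, x]` need not vanish in characteristic two.
-/

section

variable {F : Type*} [Field F] {g0 gm : Type*}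
  [AddCommGroup g0] [Module F g0] [AddCommGroup gm] [Module F gm]

theorem Lop_apply (X0 : g0 →ₗ[F] g0) (X1 : gm →ₗ[F] gm) (ω : g0 →ₗ[F] g0 →ₗ[F] gm) (x y : g0) :
    Lop X0 X1 ω x y = X1 (ω x y) - ω (X0 x) y - ω x (X0 y) :=
  rfl

theorem ldelta_apply (G : LieTwoAlg F g0 gm) (Θ : g0 →ₗ[F] gm) (x y : g0) :
    ldelta G Θ x y = Θ (G.b0 x y) - G.b1 x (Θ y) + G.b1 y (Θ x) :=
  rfl

theorem ldelta_skew (G : LieTwoAlg F g0 gm) (Θ : g0 →ₗ[F] gm) (x y : g0) :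
    ldelta G Θ x y = -ldelta G Θ y x := by
  rw [ldelta_apply, ldelta_apply, G.b0_skew x y, map_neg]
  abel

theorem d_ldelta (G : LieTwoAlg F g0 gm) (Θ : g0 →ₗ[F] gm) (x y : g0) :
    G.d (ldelta G Θ x y) =
      (G.d ∘ₗ Θ) (G.b0 x y) - G.b0 ((G.d ∘ₗ Θ) x) y - G.b0 x ((G.d ∘ₗ Θ) y) := by
  rw [ldelta_apply, map_add, map_sub, G.ax_a1, G.ax_a1, G.b0_skew y]
  simp only [comp_apply]
  abel

theorem ldelta_d (G : LieTwoAlg F g0 gm) (Θ : g0 →ₗ[F] gm) (x : g0) (a : gm) :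
    ldelta G Θ x (G.d a) =
      (Θ ∘ₗ G.d) (G.b1 x a) - G.b1 ((G.d ∘ₗ Θ) x) a - G.b1 x ((Θ ∘ₗ G.d) a) := by
  rw [ldelta_apply, G.ax_a2, ← G.ax_a1]
  simp only [comp_apply]
  abel

theorem ldelta_comp_sub_comp (G : LieTwoAlg F g0 gm) {X0 : g0 →ₗ[F] g0} {X1 : gm →ₗ[F] gm}
    {lX : g0 →ₗ[F] g0 →ₗ[F] gm} (skew : ∀ x y, lX x y = -lX y x)
    (der_a : ∀ x y, G.d (lX x y) = X0 (G.b0 x y) - G.b0 (X0 x) y - G.b0 x (X0 y))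
    (der_b : ∀ x a, lX x (G.d a) = X1 (G.b1 x a) - G.b1 (X0 x) a - G.b1 x (X1 a))
    (Θ : g0 →ₗ[F] gm) :
    ldelta G (X1 ∘ₗ Θ - Θ ∘ₗ X0) =
      Lop X0 X1 (ldelta G Θ) - Lop (G.d ∘ₗ Θ) (Θ ∘ₗ G.d) lX := by
  ext x y
  have lX_d_left (a : gm) :
      lX (G.d a) y = -(X1 (G.b1 y a) - G.b1 (X0 y) a - G.b1 y (X1 a)) := by
    rw [skew, der_b]
  simp only [LinearMap.sub_apply, comp_apply, Lop_apply, ldelta_apply, der_a, der_b, lX_d_left,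
    map_add, map_sub]
  abel

theorem dbar_bracket_compat_general (G : LieTwoAlg F g0 gm) {X0 : g0 →ₗ[F] g0}
    {X1 : gm →ₗ[F] gm} {lX : g0 →ₗ[F] g0 →ₗ[F] gm} (comm : X0 ∘ₗ G.d = G.d ∘ₗ X1)
    (skew : ∀ x y, lX x y = -lX y x)
    (der_a : ∀ x y, G.d (lX x y) = X0 (G.b0 x y) - G.b0 (X0 x) y - G.b0 x (X0 y))
    (der_b : ∀ x a, lX x (G.d a) = X1 (G.b1 x a) - G.b1 (X0 x) a - G.b1 x (X1 a))
    (Θ : g0 →ₗ[F] gm) :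
    G.d ∘ₗ (X1 ∘ₗ Θ - Θ ∘ₗ X0) = X0 ∘ₗ (G.d ∘ₗ Θ) - (G.d ∘ₗ Θ) ∘ₗ X0 ∧
    (X1 ∘ₗ Θ - Θ ∘ₗ X0) ∘ₗ G.d = X1 ∘ₗ (Θ ∘ₗ G.d) - (Θ ∘ₗ G.d) ∘ₗ X1 ∧
    ldelta G (X1 ∘ₗ Θ - Θ ∘ₗ X0) =
      Lop X0 X1 (ldelta G Θ) - Lop (G.d ∘ₗ Θ) (Θ ∘ₗ G.d) lX := by
  refine ⟨?_, ?_, ldelta_comp_sub_comp G skew der_a der_b Θ⟩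
  · rw [comp_sub, ← comp_assoc, ← comm, comp_assoc, comp_assoc]
  · rw [sub_comp, comp_assoc, comp_assoc, comm, comp_assoc]

end

/-- `d̄` is compatible with the brackets:
(1) `d̄({Θ,Θ′}) = {d̄(Θ), d̄(Θ′)}` where `{Θ,Θ′} = Θ∘d∘Θ′ − Θ′∘d∘Θ`;
(2) `d̄(X₁∘Θ − Θ∘X₀) = {(X,l_X), d̄(Θ)}` for every degree-0 derivation `(X,l_X)`. -/
theorem dbar_bracket_compat
    {F : Type*} [Field F] {g0 gm : Type*}
    [AddCommGroup g0] [Module F g0] [AddCommGroup gm] [Module F gm]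
    (G : LieTwoAlg F g0 gm) :
    (∀ Θ Θ' : g0 →ₗ[F] gm,
      G.d ∘ₗ (Θ ∘ₗ (G.d ∘ₗ Θ') - Θ' ∘ₗ (G.d ∘ₗ Θ))
          = (G.d ∘ₗ Θ) ∘ₗ (G.d ∘ₗ Θ') - (G.d ∘ₗ Θ') ∘ₗ (G.d ∘ₗ Θ) ∧
      (Θ ∘ₗ (G.d ∘ₗ Θ') - Θ' ∘ₗ (G.d ∘ₗ Θ)) ∘ₗ G.d
          = (Θ ∘ₗ G.d) ∘ₗ (Θ' ∘ₗ G.d) - (Θ' ∘ₗ G.d) ∘ₗ (Θ ∘ₗ G.d) ∧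
      ldelta G (Θ ∘ₗ (G.d ∘ₗ Θ') - Θ' ∘ₗ (G.d ∘ₗ Θ))
          = Lop (G.d ∘ₗ Θ) (Θ ∘ₗ G.d) (ldelta G Θ')
            - Lop (G.d ∘ₗ Θ') (Θ' ∘ₗ G.d) (ldelta G Θ)) ∧
    (∀ (X0 : g0 →ₗ[F] g0) (X1 : gm →ₗ[F] gm) (lX : g0 →ₗ[F] g0 →ₗ[F] gm),
      IsDer0 G.d G.b0 G.b1 G.l3 X0 X1 lX →
      ∀ Θ : g0 →ₗ[F] gm,
        G.d ∘ₗ (X1 ∘ₗ Θ - Θ ∘ₗ X0)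
            = X0 ∘ₗ (G.d ∘ₗ Θ) - (G.d ∘ₗ Θ) ∘ₗ X0 ∧
        (X1 ∘ₗ Θ - Θ ∘ₗ X0) ∘ₗ G.d
            = X1 ∘ₗ (Θ ∘ₗ G.d) - (Θ ∘ₗ G.d) ∘ₗ X1 ∧
        ldelta G (X1 ∘ₗ Θ - Θ ∘ₗ X0)
            = Lop X0 X1 (ldelta G Θ) - Lop (G.d ∘ₗ Θ) (Θ ∘ₗ G.d) lX) := by
  refine ⟨fun Θ Θ' => ?_, fun X0 X1 lX h Θ => ?_⟩
  · exact dbar_bracket_compat_general G rfl (ldelta_skew G Θ) (d_ldelta G Θ) (ldelta_d G Θ) Θ'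
  · exact dbar_bracket_compat_general G h.comm (fun x y => (IsAlt.neg h.alt y x).symm)
      h.der_a h.der_b Θ
end

section
/- Let g be a Lie 2-algebra over a field F. For all τ, τ′ ∈ Hom(g₀,g₋₁), ∂(τ ⋆ τ′) = ∂(τ) ⋄ ∂(τ′). Componentwise: (id + d∘τ)∘(id + d∘τ′) = id + d∘(τ ⋆ τ′); (id + τ∘d)∘(id + τ′∘d) = id + (τ ⋆ τ′)∘d; and for all x,y ∈ g₀: l^{id}_τ((id + d∘τ′)x, (id + d∘τ′)y) + (id + τ∘d)(l^{id}_{τ′}(x,y)) = l^{id}_{τ⋆τ′}(x,y). -/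
open LinearMap

/-- The multiplication `τ ⋆ τ′ = τ + τ′ + τ∘d∘τ′` on `Hom(g₀,g₋₁)`. -/
def starm {F : Type*} [Field F] {g0 gm : Type*}
    [AddCommGroup g0] [Module F g0] [AddCommGroup gm] [Module F gm]
    (d : gm →ₗ[F] g0) (τ τ' : g0 →ₗ[F] gm) : g0 →ₗ[F] gm :=
  τ + τ' + τ ∘ₗ (d ∘ₗ τ')

/-- `l^{id}_τ(x,y) = τ[x,y] − [x,τy] − [τx,y] − [τx,dτy]`
(using `[a,x] = -[x,a]` to express the last two terms through `b1`). -/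
def lid {F : Type*} [Field F] {g0 gm : Type*}
    [AddCommGroup g0] [Module F g0] [AddCommGroup gm] [Module F gm]
    (G : LieTwoAlg F g0 gm) (τ : g0 →ₗ[F] gm) (x y : g0) : gm :=
  τ (G.b0 x y) - G.b1 x (τ y) + G.b1 y (τ x) + G.b1 (G.d (τ y)) (τ x)

/-!
A linear map `τ : g₀ → g₋₁` is a homotopy from the identity to `∂(τ)`, and `l^{id}_τ` is the
bilinear form that the target of such a homotopy acquires. Composing `τ` with `∂(τ′)` gives a
homotopy `τ∘(id + d∘τ′)` from `∂(τ′)` to `∂(τ) ⋄ ∂(τ′)`; pasting it after `τ′` gives a homotopy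
from the identity to `∂(τ) ⋄ ∂(τ′)`, namely `τ′ + τ∘(id + d∘τ′) = τ ⋆ τ′`. The forms add up under
pasting because `[da, b] = [a, db]`, and composing with `∂(τ′)` contributes `τ` applied to the
failure of `id + d∘τ′` to preserve brackets, which is `d∘l^{id}_{τ′}`.
-/

/-- The part of a Lie 2-algebra that homotopies of linear maps interact with: the differential,
the skew-symmetric bracket in degree `0`, the mixed bracket (called `action`) and axiom (a). There
is no Jacobi identity, even up to homotopy. As in `LieTwoAlg`, `[a, x]` is encoded as
`- action x a`. -/
structure SkewTwoAlg (R : Type*) [CommRing R] (V W : Type*)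
    [AddCommGroup V] [Module R V] [AddCommGroup W] [Module R W] where
  d : W →ₗ[R] V
  bracket : V →ₗ[R] V →ₗ[R] V
  action : V →ₗ[R] W →ₗ[R] W
  bracket_skew : ∀ x y, bracket x y = -bracket y x
  d_action : ∀ x a, d (action x a) = bracket x (d a)
  action_d_skew : ∀ a b, action (d a) b = -action (d b) a

/-- A triple `(A₀, A₁, A₂)`, the data underlying an endomorphism of a two-term algebra with `V` in
degree `0` and `W` in degree `-1`; no compatibility between the components is imposed. -/
@[ext]
structure TwoTermTriple (R : Type*) [CommRing R] (V W : Type*)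
    [AddCommGroup V] [Module R V] [AddCommGroup W] [Module R W] where
  onZero : V →ₗ[R] V
  onNegOne : W →ₗ[R] W
  form : V →ₗ[R] V →ₗ[R] W

section General

variable {R : Type*} [CommRing R] {V W : Type*}
  [AddCommGroup V] [Module R V] [AddCommGroup W] [Module R W]

/-- The composition `B ⋄ A` of triples. -/
def TwoTermTriple.comp (B A : TwoTermTriple R V W) : TwoTermTriple R V W where
  onZero := B.onZero ∘ₗ A.onZero
  onNegOne := B.onNegOne ∘ₗ A.onNegOne
  form := B.form.compl₁₂ A.onZero A.onZero + A.form.compr₂ B.onNegOne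

namespace SkewTwoAlg

variable (G : SkewTwoAlg R V W)

/-- The failure `φ[x, y] - [φx, φy]` of a linear map `φ` to preserve the bracket. -/
def bracketDefect (φ : V →ₗ[R] V) : V →ₗ[R] V →ₗ[R] V :=
  G.bracket.compr₂ φ - G.bracket.compl₁₂ φ φ

/-- The form `τ[x, y] - [φx, τy] - [τx, (φ + d∘τ)y]` that a homotopy `τ` starting at `φ` adds to
the bilinear component of a triple. The homotopy ends at `φ + d∘τ`. -/
def homotopyForm (φ : V →ₗ[R] V) (τ : V →ₗ[R] W) : V →ₗ[R] V →ₗ[R] W :=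
  G.bracket.compr₂ τ - G.action.compl₁₂ φ τ + (G.action.compl₁₂ (φ + G.d ∘ₗ τ) τ).flip

/-- The product `τ ⋆ τ′` on linear maps of degree `-1`. -/
def star (τ τ' : V →ₗ[R] W) : V →ₗ[R] W :=
  τ + τ' + τ ∘ₗ (G.d ∘ₗ τ')

/-- The triple `∂(τ)` at which the homotopy `τ` starting at the identity ends. -/
def homotopyTriple (τ : V →ₗ[R] W) : TwoTermTriple R V W where
  onZero := LinearMap.id + G.d ∘ₗ τ
  onNegOne := LinearMap.id + τ ∘ₗ G.d
  form := G.homotopyForm LinearMap.id τ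

theorem bracketDefect_apply (φ : V →ₗ[R] V) (x y : V) :
    G.bracketDefect φ x y = φ (G.bracket x y) - G.bracket (φ x) (φ y) :=
  rfl

theorem homotopyForm_apply (φ : V →ₗ[R] V) (τ : V →ₗ[R] W) (x y : V) :
    G.homotopyForm φ τ x y =
      τ (G.bracket x y) - G.action (φ x) (τ y) + G.action (φ y + G.d (τ y)) (τ x) :=
  rfl

theorem bracketDefect_id : G.bracketDefect LinearMap.id = 0 := by
  ext x y
  exact sub_self (G.bracket x y)

theorem d_action_eq_neg_bracket (x : V) (a : W) :
    G.d (G.action x a) = -G.bracket (G.d a) x := by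
  rw [G.d_action, G.bracket_skew]

theorem homotopyForm_compr₂_d (φ : V →ₗ[R] V) (τ : V →ₗ[R] W) :
    (G.homotopyForm φ τ).compr₂ G.d =
      G.bracketDefect (φ + G.d ∘ₗ τ) - G.bracketDefect φ := by
  ext x y
  calc G.d (G.homotopyForm φ τ x y)
      = G.d (τ (G.bracket x y)) - G.bracket (φ x) (G.d (τ y))
          - G.bracket (G.d (τ x)) (φ y + G.d (τ y)) := by
        rw [homotopyForm_apply, map_add, map_sub, G.d_action, G.d_action_eq_neg_bracket,
          ← sub_eq_add_neg]
    _ = (G.bracketDefect (φ + G.d ∘ₗ τ) - G.bracketDefect φ) x y := by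
        simp only [bracketDefect_apply, LinearMap.sub_apply, LinearMap.add_apply,
          LinearMap.comp_apply, map_add]
        abel

theorem homotopyForm_id_compr₂_d (τ : V →ₗ[R] W) :
    (G.homotopyForm LinearMap.id τ).compr₂ G.d =
      G.bracketDefect (LinearMap.id + G.d ∘ₗ τ) := by
  rw [homotopyForm_compr₂_d, bracketDefect_id, sub_zero]

theorem homotopyForm_add (φ : V →ₗ[R] V) (τ σ : V →ₗ[R] W) :
    G.homotopyForm φ (τ + σ) =
      G.homotopyForm φ τ + G.homotopyForm (φ + G.d ∘ₗ τ) σ := by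
  ext x y
  have cross_terms_cancel := G.action_d_skew (τ x) (σ y)
  simp only [homotopyForm_apply, LinearMap.add_apply, LinearMap.comp_apply, map_add,
    cross_terms_cancel]
  abel

theorem homotopyForm_comp (ψ φ : V →ₗ[R] V) (τ : V →ₗ[R] W) :
    G.homotopyForm (ψ ∘ₗ φ) (τ ∘ₗ φ) =
      (G.homotopyForm ψ τ).compl₁₂ φ φ + (G.bracketDefect φ).compr₂ τ := by
  ext x y
  simp only [homotopyForm_apply, bracketDefect_apply, LinearMap.add_apply, LinearMap.comp_apply,
    compl₁₂_apply, compr₂_apply, map_sub]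
  abel

theorem star_eq_add_comp (τ τ' : V →ₗ[R] W) :
    G.star τ τ' = τ' + τ ∘ₗ (LinearMap.id + G.d ∘ₗ τ') := by
  rw [star, comp_add, comp_id, add_comm τ, add_assoc]

theorem homotopyForm_star (τ τ' : V →ₗ[R] W) :
    G.homotopyForm LinearMap.id (G.star τ τ') =
      (G.homotopyForm LinearMap.id τ).compl₁₂
          (LinearMap.id + G.d ∘ₗ τ') (LinearMap.id + G.d ∘ₗ τ')
        + (G.homotopyForm LinearMap.id τ').compr₂ (LinearMap.id + τ ∘ₗ G.d) := by
  set A := LinearMap.id + G.d ∘ₗ τ' with hA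
  have form_along_A : G.homotopyForm A (τ ∘ₗ A) =
      (G.homotopyForm LinearMap.id τ).compl₁₂ A A + (G.bracketDefect A).compr₂ τ :=
    G.homotopyForm_comp LinearMap.id A τ
  rw [star_eq_add_comp, homotopyForm_add, ← hA, form_along_A, hA, ← homotopyForm_id_compr₂_d,
    add_left_comm]
  rfl

end SkewTwoAlg

theorem partial_multiplicative_general (G : SkewTwoAlg R V W) (τ τ' : V →ₗ[R] W) :
    G.homotopyTriple (G.star τ τ') = (G.homotopyTriple τ).comp (G.homotopyTriple τ') := by
  apply TwoTermTriple.ext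
  · change LinearMap.id + G.d ∘ₗ G.star τ τ' =
      (LinearMap.id + G.d ∘ₗ τ) ∘ₗ (LinearMap.id + G.d ∘ₗ τ')
    rw [G.star_eq_add_comp, comp_add, add_comp, id_comp, comp_assoc, add_assoc]
  · change LinearMap.id + G.star τ τ' ∘ₗ G.d =
      (LinearMap.id + τ ∘ₗ G.d) ∘ₗ (LinearMap.id + τ' ∘ₗ G.d)
    simp only [SkewTwoAlg.star, add_comp, comp_add, id_comp, comp_id, comp_assoc]
    abel
  · exact G.homotopyForm_star τ τ'

end General

section LieTwoAlg

variable {F : Type*} [Field F] {g0 gm : Type*}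
  [AddCommGroup g0] [Module F g0] [AddCommGroup gm] [Module F gm]

/-- The differential and brackets of a Lie 2-algebra, forgetting `l₃`. -/
def LieTwoAlg.toSkewTwoAlg (G : LieTwoAlg F g0 gm) : SkewTwoAlg F g0 gm where
  d := G.d
  bracket := G.b0
  action := G.b1
  bracket_skew := G.b0_skew
  d_action := G.ax_a1
  action_d_skew := G.ax_a2

theorem lid_eq_homotopyForm (G : LieTwoAlg F g0 gm) (τ : g0 →ₗ[F] gm) (x y : g0) :
    lid G τ x y = G.toSkewTwoAlg.homotopyForm LinearMap.id τ x y := by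
  rw [SkewTwoAlg.homotopyForm_apply, map_add, LinearMap.add_apply, ← add_assoc]
  rfl

end LieTwoAlg

/-- `∂ : (Hom(g₀,g₋₁), ⋆) → (Aut⁰(g), ⋄)` is multiplicative,
`∂(τ ⋆ τ′) = ∂(τ) ⋄ ∂(τ′)`, componentwise. -/
theorem partial_multiplicative
    {F : Type*} [Field F] {g0 gm : Type*}
    [AddCommGroup g0] [Module F g0] [AddCommGroup gm] [Module F gm]
    (G : LieTwoAlg F g0 gm) :
    ∀ τ τ' : g0 →ₗ[F] gm,
      (∀ x : g0,
        (x + G.d (τ' x)) + G.d (τ (x + G.d (τ' x)))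
          = x + G.d (starm G.d τ τ' x)) ∧
      (∀ a : gm,
        (a + τ' (G.d a)) + τ (G.d (a + τ' (G.d a)))
          = a + starm G.d τ τ' (G.d a)) ∧
      (∀ x y : g0,
        lid G τ (x + G.d (τ' x)) (y + G.d (τ' y))
            + (lid G τ' x y + τ (G.d (lid G τ' x y)))
          = lid G (starm G.d τ τ') x y) := by
  intro τ τ'
  have h := partial_multiplicative_general G.toSkewTwoAlg τ τ'
  have h_zero := congrArg TwoTermTriple.onZero h
  have h_negOne := congrArg TwoTermTriple.onNegOne h
  have h_form := congrArg TwoTermTriple.form h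
  refine ⟨fun x => (LinearMap.congr_fun h_zero x).symm,
    fun a => (LinearMap.congr_fun h_negOne a).symm, fun x y => ?_⟩
  simp only [lid_eq_homotopyForm]
  exact (LinearMap.congr_fun₂ h_form x y).symm
end

section
/- Let g₀, g₋₁ be vector spaces over a field F and d : g₋₁ → g₀ linear; equip Hom(g₀,g₋₁) with τ ⋆ τ′ := τ + τ′ + τ∘d∘τ′. Let τ ∈ Hom(g₀,g₋₁) be ⋆-invertible with ⋆-inverse τ⁻¹. Then for every τ′ ∈ Hom(g₀,g₋₁): (id + τ∘d)∘τ′∘(id + d∘τ)⁻¹ = τ ⋆ τ′ ⋆ τ⁻¹ (the Peiffer identity ∂(τ) ▷ τ′ = τ ⋆ τ′ ⋆ τ⁻¹). Equivalently, both sides equal τ′ + τ∘d∘τ′ + τ′∘d∘τ⁻¹ + τ∘d∘τ′∘d∘τ⁻¹. -/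
open LinearMap

/-!
The product `τ ⋆ σ` is `τ + (id + τ∘d)∘σ`, and also `σ + τ∘(id + d∘σ)`: up to a translation, `⋆` is
left multiplication by `id + τ∘d`, and also right multiplication by `id + d∘σ`. Expanding
`τ ⋆ (ρ ⋆ σ)` by both descriptions gives `τ ⋆ σ + (id + τ∘d)∘ρ∘(id + d∘σ)`, whose first term
vanishes when `σ` is a right `⋆`-inverse of `τ`. The inverse of `id + d∘τ` comes from
`τ ↦ id + d∘τ` sending `⋆` to composition and `0` to `id`.
-/

section Semiring

variable {R M N : Type*} [Semiring R] [AddCommMonoid M] [Module R M] [AddCommMonoid N] [Module R N]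
  (d : N →ₗ[R] M) (τ ρ σ : M →ₗ[R] N)

/-- The product `τ ⋆ σ` on linear maps `M → N` determined by `d : N → M`, over an arbitrary
semiring. Over a field it is definitionally equal to `starm`. -/
def starMul : M →ₗ[R] N :=
  τ + σ + τ ∘ₗ (d ∘ₗ σ)

theorem starMul_eq_left_add_comp :
    starMul d τ σ = τ + (LinearMap.id + τ ∘ₗ d) ∘ₗ σ := by
  rw [starMul, add_comp, id_comp, comp_assoc, add_assoc]

theorem starMul_eq_right_add_comp :
    starMul d τ σ = σ + τ ∘ₗ (LinearMap.id + d ∘ₗ σ) := by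
  rw [starMul, comp_add, comp_id, add_comm τ σ, add_assoc]

theorem id_add_comp_starMul :
    LinearMap.id + d ∘ₗ starMul d τ σ =
      (LinearMap.id + d ∘ₗ τ) ∘ₗ (LinearMap.id + d ∘ₗ σ) := by
  rw [starMul_eq_right_add_comp, comp_add, add_comp, id_comp, comp_assoc, add_assoc]

theorem starMul_starMul_eq_add_comp :
    starMul d τ (starMul d ρ σ) =
      starMul d τ σ + (LinearMap.id + τ ∘ₗ d) ∘ₗ (ρ ∘ₗ (LinearMap.id + d ∘ₗ σ)) := by
  rw [starMul_eq_left_add_comp d τ, starMul_eq_right_add_comp d ρ, comp_add, ← add_assoc,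
    ← starMul_eq_left_add_comp]

theorem id_add_comp_comp_id_add_comp :
    (LinearMap.id + τ ∘ₗ d) ∘ₗ (ρ ∘ₗ (LinearMap.id + d ∘ₗ σ)) =
      ρ + τ ∘ₗ (d ∘ₗ ρ) + ρ ∘ₗ (d ∘ₗ σ) + τ ∘ₗ (d ∘ₗ (ρ ∘ₗ (d ∘ₗ σ))) := by
  simp only [add_comp, comp_add, id_comp, comp_id, comp_assoc]
  abel

variable {d τ σ}

theorem id_add_comp_comp_eq_id_of_starMul_eq_zero (h : starMul d τ σ = 0) :
    (LinearMap.id + d ∘ₗ τ) ∘ₗ (LinearMap.id + d ∘ₗ σ) = LinearMap.id := by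
  rw [← id_add_comp_starMul, h, comp_zero, add_zero]

theorem starMul_starMul_of_starMul_eq_zero (h : starMul d τ σ = 0) :
    starMul d τ (starMul d ρ σ) =
      (LinearMap.id + τ ∘ₗ d) ∘ₗ (ρ ∘ₗ (LinearMap.id + d ∘ₗ σ)) := by
  rw [starMul_starMul_eq_add_comp, h, zero_add]

end Semiring

theorem peiffer_identity_general
    {R M N : Type*} [Semiring R] [AddCommMonoid M] [Module R M] [AddCommMonoid N] [Module R N]
    (d : N →ₗ[R] M) (τ τinv : M →ₗ[R] N)
    (h1 : starMul d τ τinv = 0) (h2 : starMul d τinv τ = 0) :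
    (∀ ρ : M →ₗ[R] N,
      (LinearMap.id + τ ∘ₗ d) ∘ₗ (ρ ∘ₗ (LinearMap.id + d ∘ₗ τinv))
          = starMul d τ (starMul d ρ τinv) ∧
      starMul d τ (starMul d ρ τinv)
          = ρ + τ ∘ₗ (d ∘ₗ ρ) + ρ ∘ₗ (d ∘ₗ τinv)
            + τ ∘ₗ (d ∘ₗ (ρ ∘ₗ (d ∘ₗ τinv)))) ∧
    (LinearMap.id + d ∘ₗ τ) ∘ₗ (LinearMap.id + d ∘ₗ τinv) = LinearMap.id ∧
    (LinearMap.id + d ∘ₗ τinv) ∘ₗ (LinearMap.id + d ∘ₗ τ) = LinearMap.id := by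
  refine ⟨fun ρ ↦ ?_, id_add_comp_comp_eq_id_of_starMul_eq_zero h1,
    id_add_comp_comp_eq_id_of_starMul_eq_zero h2⟩
  have conj_eq := starMul_starMul_of_starMul_eq_zero ρ h1
  exact ⟨conj_eq.symm, conj_eq.trans (id_add_comp_comp_id_add_comp d τ ρ τinv)⟩

/-- the Peiffer identity `∂(τ) ▷ τ′ = τ ⋆ τ′ ⋆ τ⁻¹`:
for a ⋆-invertible `τ` (with ⋆-inverse `τ⁻¹`, so that
`(id + d∘τ)⁻¹ = id + d∘τ⁻¹`) and any `τ′`,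
`(id + τ∘d) ∘ τ′ ∘ (id + d∘τ)⁻¹ = τ ⋆ τ′ ⋆ τ⁻¹
  = τ′ + τ∘d∘τ′ + τ′∘d∘τ⁻¹ + τ∘d∘τ′∘d∘τ⁻¹`. -/
theorem peiffer_identity
    {F : Type*} [Field F] {g0 gm : Type*}
    [AddCommGroup g0] [Module F g0] [AddCommGroup gm] [Module F gm]
    (d : gm →ₗ[F] g0) (τ τinv : g0 →ₗ[F] gm)
    (h1 : starm d τ τinv = 0) (h2 : starm d τinv τ = 0) :
    (∀ τ' : g0 →ₗ[F] gm,
      (LinearMap.id + τ ∘ₗ d) ∘ₗ (τ' ∘ₗ (LinearMap.id + d ∘ₗ τinv))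
          = starm d τ (starm d τ' τinv) ∧
      starm d τ (starm d τ' τinv)
          = τ' + τ ∘ₗ (d ∘ₗ τ') + τ' ∘ₗ (d ∘ₗ τinv)
            + τ ∘ₗ (d ∘ₗ (τ' ∘ₗ (d ∘ₗ τinv)))) ∧
    (LinearMap.id + d ∘ₗ τ) ∘ₗ (LinearMap.id + d ∘ₗ τinv) = LinearMap.id ∧
    (LinearMap.id + d ∘ₗ τinv) ∘ₗ (LinearMap.id + d ∘ₗ τ) = LinearMap.id :=
  peiffer_identity_general d τ τinv h1 h2
end

section
/- Let g₀, g₋₁ be finite-dimensional real vector spaces, X₀ ∈ End(g₀), X₁ ∈ End(g₋₁), and l_X : g₀ × g₀ → g₋₁ a bilinear map. Define E(t)(x,y) := ∑_{n=1}^∞ (tⁿ/n!) ∑_{i+j+k=n−1, i,j,k≥0} C(i+j, i) · X₁ᵏ( l_X(X₀ⁱ x, X₀ʲ y) ). Then for all fixed x,y ∈ g₀, the map t ↦ E(t)(x,y) is differentiable and d/dt E(t)(x,y) = l_X(exp(tX₀)x, exp(tX₀)y) + X₁( E(t)(x,y) ) for every t ∈ ℝ. -/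
open LinearMap

/-- The exponential `exp(X) m = ∑ Xⁿm/n!` of a linear endomorphism. -/
noncomputable def expv {M : Type*} [NormedAddCommGroup M] [NormedSpace ℝ M]
    (X : M →ₗ[ℝ] M) (m : M) : M :=
  ∑' n : ℕ, ((n.factorial : ℝ))⁻¹ • (X ^ n) m

/-- The series
`E(t)(x,y) = ∑_{n≥1} (tⁿ/n!) ∑_{i+j+k=n−1} C(i+j,i) X₁ᵏ l_X(X₀ⁱx, X₀ʲy)`. -/
noncomputable def Eser {g0 gm : Type*}
    [NormedAddCommGroup g0] [NormedSpace ℝ g0]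
    [NormedAddCommGroup gm] [NormedSpace ℝ gm]
    (X0 : g0 →ₗ[ℝ] g0) (X1 : gm →ₗ[ℝ] gm) (lX : g0 →ₗ[ℝ] g0 →ₗ[ℝ] gm)
    (t : ℝ) (x y : g0) : gm :=
  ∑' n : ℕ, (t ^ (n + 1) / ((n + 1).factorial : ℝ)) •
    ∑ c ∈ Finset.Nat.antidiagonalTuple 3 n,
      (((c 0 + c 1).choose (c 0) : ℝ)) •
        (X1 ^ (c 2)) (lX ((X0 ^ (c 0)) x) ((X0 ^ (c 1)) y))

/-!
For fixed `x, y`, `E` is the exponential generating function of the sequence with `c 0 = 0` and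
`c (n + 1) = a n + X₁ (c n)`, where `a n = ∑ C(n,i) l_X(X₀ⁱx, X₀ⁿ⁻ⁱy)`. Differentiating an
exponential generating function shifts its coefficients, so this recurrence is exactly the
differential equation for `E`, with inhomogeneous term the generating function of `a`. By the Cauchy
product the latter is `l_X(exp(tX₀)x, exp(tX₀)y)`. Geometric growth of the coefficients is preserved
by all these operations and makes every series converge absolutely.
-/

open Finset
open scoped Nat

section Coefficients

variable {R M : Type*} [Semiring R] [AddCommMonoid M] [Module R M]

/-- The coefficients, with respect to `tⁿ/n!`, of the solution of `u' = f + X u`, `u 0 = 0`, where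
`a` is the sequence of coefficients of `f`. -/
def inhomogeneousCoeff (X : M →ₗ[R] M) (a : ℕ → M) : ℕ → M
  | 0 => 0
  | n + 1 => a n + X (inhomogeneousCoeff X a n)

lemma inhomogeneousCoeff_succ_eq_sum (X : M →ₗ[R] M) (a : ℕ → M) (n : ℕ) :
    inhomogeneousCoeff X a (n + 1) = ∑ p ∈ antidiagonal n, (X ^ p.2) (a p.1) := by
  induction n with
  | zero => simp [inhomogeneousCoeff]
  | succ n ih =>
    rw [inhomogeneousCoeff, ih, Nat.sum_antidiagonal_succ']
    simp [pow_succ']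

lemma sum_antidiagonalTuple_three (f : ℕ → ℕ → ℕ → M) (n : ℕ) :
    ∑ c ∈ Nat.antidiagonalTuple 3 n, f (c 0) (c 1) (c 2) =
      ∑ p ∈ antidiagonal n, ∑ q ∈ antidiagonal p.1, f q.1 q.2 p.2 := by
  rw [sum_sigma']
  refine sum_bij' (fun c _ ↦ ⟨(c 0 + c 1, c 2), (c 0, c 1)⟩)
    (fun s _ ↦ ![s.2.1, s.2.2, s.1.2]) ?_ ?_ ?_ ?_ (fun _ _ ↦ rfl)
  · intro c hc
    simpa [Nat.mem_antidiagonalTuple, Fin.sum_univ_three] using hc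
  · rintro ⟨⟨m, k⟩, ⟨i, j⟩⟩ h
    simp only [mem_sigma, HasAntidiagonal.mem_antidiagonal] at h
    simp [Nat.mem_antidiagonalTuple, Fin.sum_univ_three, h]
  · intro c _
    ext i
    fin_cases i <;> rfl
  · rintro ⟨⟨m, k⟩, ⟨i, j⟩⟩ h
    obtain ⟨-, rfl⟩ : m + k = n ∧ i + j = m := by simpa using h
    rfl

end Coefficients

section BinomialConvolution

variable {R M N P : Type*} [CommSemiring R] [AddCommMonoid M] [AddCommMonoid N] [AddCommMonoid P]
  [Module R M] [Module R N] [Module R P]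

/-- The binomial convolution of two sequences along a bilinear map: the sequence of coefficients,
with respect to `tⁿ/n!`, of the product of the corresponding exponential generating functions. -/
def binomialConvolution (B : M →ₗ[R] N →ₗ[R] P) (a : ℕ → M) (b : ℕ → N) (n : ℕ) : P :=
  ∑ p ∈ antidiagonal n, (n.choose p.1 : R) • B (a p.1) (b p.2)

end BinomialConvolution

section GeometricGrowth

variable {E : Type*} [SeminormedAddCommGroup E]

/-- The sequence `a` is bounded in norm by a geometric progression `K rⁿ`, of arbitrary ratio. -/
def HasGeometricGrowth (a : ℕ → E) : Prop :=
  ∃ K r : ℝ, 0 ≤ r ∧ ∀ n, ‖a n‖ ≤ K * r ^ n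

namespace HasGeometricGrowth

lemma zero : HasGeometricGrowth (0 : ℕ → E) := ⟨0, 0, le_rfl, by simp⟩

lemma comp_succ {a : ℕ → E} (ha : HasGeometricGrowth a) :
    HasGeometricGrowth fun n ↦ a (n + 1) := by
  obtain ⟨K, r, hr, ha⟩ := ha
  exact ⟨K * r, r, hr, fun n ↦ (ha (n + 1)).trans_eq (by ring)⟩

lemma summable_pow_div_factorial_mul_norm {a : ℕ → E} (ha : HasGeometricGrowth a) {R : ℝ}
    (hR : 0 ≤ R) : Summable fun n : ℕ ↦ R ^ n / n ! * ‖a n‖ := by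
  obtain ⟨K, r, -, ha⟩ := ha
  refine .of_nonneg_of_le (fun n ↦ by positivity) (fun n ↦ ?_)
    ((Real.summable_pow_div_factorial (R * r)).mul_left K)
  calc R ^ n / n ! * ‖a n‖ ≤ R ^ n / n ! * (K * r ^ n) := by gcongr; exact ha n
    _ = K * ((R * r) ^ n / n !) := by rw [mul_pow]; ring

variable {𝕜 : Type*} [RCLike 𝕜]

lemma of_recurrence [NormedSpace 𝕜 E] {a c : ℕ → E} (X : E →L[𝕜] E) (ha : HasGeometricGrowth a)
    (hc : ∀ n, c (n + 1) = a n + X (c n)) : HasGeometricGrowth c := by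
  obtain ⟨K, r, hr, ha⟩ := ha
  have hK : 0 ≤ K := by simpa using (norm_nonneg _).trans (ha 0)
  refine ⟨‖c 0‖ + K, r + 1 + ‖X‖, by positivity, fun n ↦ ?_⟩
  induction n with
  | zero => simpa using hK
  | succ n ih =>
    set q := r + 1 + ‖X‖
    have hrq : r ≤ q := by simp only [q]; linarith [norm_nonneg X]
    have hq : 1 + ‖X‖ ≤ q := by simp only [q]; linarith
    calc ‖c (n + 1)‖ ≤ ‖a n‖ + ‖X‖ * ‖c n‖ := by
          rw [hc]; exact (norm_add_le _ _).trans (by gcongr; exact X.le_opNorm _)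
      _ ≤ K * r ^ n + ‖X‖ * ((‖c 0‖ + K) * q ^ n) := by gcongr; exact ha n
      _ ≤ (‖c 0‖ + K) * q ^ n + ‖X‖ * ((‖c 0‖ + K) * q ^ n) := by
          gcongr; exact le_add_of_nonneg_left (norm_nonneg _)
      _ = (‖c 0‖ + K) * (q ^ n * (1 + ‖X‖)) := by ring
      _ ≤ (‖c 0‖ + K) * q ^ (n + 1) := by rw [pow_succ]; gcongr

lemma map {F : Type*} [SeminormedAddCommGroup F] [NormedSpace 𝕜 E] [NormedSpace 𝕜 F]
    {a : ℕ → E} (ha : HasGeometricGrowth a) (X : E →L[𝕜] F) :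
    HasGeometricGrowth fun n ↦ X (a n) := by
  obtain ⟨K, r, hr, ha⟩ := ha
  refine ⟨‖X‖ * K, r, hr, fun n ↦ (X.le_opNorm _).trans ?_⟩
  rw [mul_assoc]
  gcongr
  exact ha n

lemma pow_apply [NormedSpace 𝕜 E] (X : E →L[𝕜] E) (x : E) :
    HasGeometricGrowth fun n ↦ (X ^ n) x :=
  of_recurrence X zero fun n ↦ by simp [pow_succ']

lemma binomialConvolution {F G : Type*} [SeminormedAddCommGroup F] [SeminormedAddCommGroup G]
    [NormedSpace 𝕜 E] [NormedSpace 𝕜 F] [NormedSpace 𝕜 G] (B : E →L[𝕜] F →L[𝕜] G)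
    {a : ℕ → E} {b : ℕ → F} (ha : HasGeometricGrowth a) (hb : HasGeometricGrowth b) :
    HasGeometricGrowth (binomialConvolution B.toLinearMap₁₂ a b) := by
  obtain ⟨K, r, hr, ha⟩ := ha
  obtain ⟨K', r', hr', hb⟩ := hb
  refine ⟨‖B‖ * K * K', r + r', by positivity, fun n ↦ ?_⟩
  rw [(Commute.all r r').add_pow', mul_sum]
  refine norm_sum_le_of_le _ fun p _ ↦ ?_
  calc ‖(n.choose p.1 : 𝕜) • B (a p.1) (b p.2)‖
      ≤ n.choose p.1 * (‖B‖ * ‖a p.1‖ * ‖b p.2‖) := by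
        rw [norm_smul, RCLike.norm_natCast]
        gcongr
        exact B.le_opNorm₂ _ _
    _ ≤ n.choose p.1 * (‖B‖ * (K * r ^ p.1) * (K' * r' ^ p.2)) := by
        have := (norm_nonneg _).trans (ha p.1)
        gcongr
        exacts [ha _, hb _]
    _ = ‖B‖ * K * K' * n.choose p.1 • (r ^ p.1 * r' ^ p.2) := by rw [nsmul_eq_mul]; ring

end HasGeometricGrowth

end GeometricGrowth

section CauchyProduct

variable {𝕜 E F G ι κ : Type*} [NontriviallyNormedField 𝕜]
  [NormedAddCommGroup E] [NormedSpace 𝕜 E] [NormedAddCommGroup F] [NormedSpace 𝕜 F]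
  [NormedAddCommGroup G] [NormedSpace 𝕜 G] [CompleteSpace G] (B : E →L[𝕜] F →L[𝕜] G)

lemma summable_apply₂_of_summable_norm {f : ι → E} {g : κ → F}
    (hf : Summable fun i ↦ ‖f i‖) (hg : Summable fun j ↦ ‖g j‖) :
    Summable fun p : ι × κ ↦ B (f p.1) (g p.2) := by
  have hfg : Summable fun p : ι × κ ↦ ‖f p.1‖ * ‖g p.2‖ :=
    hf.mul_of_nonneg hg (fun _ ↦ norm_nonneg _) fun _ ↦ norm_nonneg _
  refine .of_norm_bounded (hfg.mul_left ‖B‖) fun p ↦ ?_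
  rw [← mul_assoc]
  exact B.le_opNorm₂ _ _

variable [CompleteSpace E] [CompleteSpace F]

lemma apply₂_tsum_tsum_of_summable_norm {f : ι → E} {g : κ → F}
    (hf : Summable fun i ↦ ‖f i‖) (hg : Summable fun j ↦ ‖g j‖) :
    B (∑' i, f i) (∑' j, g j) = ∑' p : ι × κ, B (f p.1) (g p.2) :=
  calc B (∑' i, f i) (∑' j, g j) = ∑' i, B (f i) (∑' j, g j) :=
        (B.flip (∑' j, g j)).map_tsum hf.of_norm
    _ = ∑' i, ∑' j, B (f i) (g j) := tsum_congr fun i ↦ (B (f i)).map_tsum hg.of_norm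
    _ = ∑' p : ι × κ, B (f p.1) (g p.2) :=
        (summable_apply₂_of_summable_norm B hf hg).tsum_prod.symm

lemma apply₂_tsum_tsum_eq_tsum_sum_antidiagonal_of_summable_norm {f : ℕ → E} {g : ℕ → F}
    (hf : Summable fun i ↦ ‖f i‖) (hg : Summable fun j ↦ ‖g j‖) :
    B (∑' i, f i) (∑' j, g j) = ∑' n, ∑ p ∈ antidiagonal n, B (f p.1) (g p.2) := by
  have hfg := HasAntidiagonal.sigmaAntidiagonalEquivProd.summable_iff.2
    (summable_apply₂_of_summable_norm B hf hg)
  rw [apply₂_tsum_tsum_of_summable_norm B hf hg,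
    ← HasAntidiagonal.sigmaAntidiagonalEquivProd.tsum_eq]
  refine hfg.tsum_sigma.trans (tsum_congr fun n ↦ ?_)
  rw [tsum_fintype, ← sum_coe_sort (antidiagonal n)]
  rfl

end CauchyProduct

section ExpGenFun

variable {𝕜 E : Type*} [RCLike 𝕜] [NormedAddCommGroup E] [NormedSpace 𝕜 E]

/-- The exponential generating function `∑ tⁿ/n! aₙ` of a sequence of vectors. It takes the junk
value `0` where the series is not summable. -/
noncomputable def expGenFun (a : ℕ → E) (t : 𝕜) : E :=
  ∑' n : ℕ, (t ^ n / (n ! : 𝕜)) • a n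

lemma expGenFun_eq_tsum_succ {a : ℕ → E} (ha : a 0 = 0) (t : 𝕜) :
    expGenFun a t = ∑' n : ℕ, (t ^ (n + 1) / ((n + 1)! : 𝕜)) • a (n + 1) := by
  refine (Nat.succ_injective.tsum_eq fun n hn ↦ ?_).symm
  have hn0 : n ≠ 0 := by rintro rfl; simp [ha] at hn
  exact ⟨n - 1, Nat.succ_pred hn0⟩

namespace HasGeometricGrowth

lemma summable_norm {a : ℕ → E} (ha : HasGeometricGrowth a) (t : 𝕜) :
    Summable fun n : ℕ ↦ ‖(t ^ n / (n ! : 𝕜)) • a n‖ := by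
  simpa [norm_smul] using ha.summable_pow_div_factorial_mul_norm (norm_nonneg t)

variable [CompleteSpace E]

lemma expGenFun_eq_add_tsum {a : ℕ → E} (ha : HasGeometricGrowth a) (t : 𝕜) :
    expGenFun a t = a 0 + ∑' n : ℕ, (t ^ (n + 1) / ((n + 1)! : 𝕜)) • a (n + 1) := by
  simpa [expGenFun] using (ha.summable_norm t).of_norm.tsum_eq_zero_add

lemma expGenFun_add {a b : ℕ → E} (ha : HasGeometricGrowth a) (hb : HasGeometricGrowth b) (t : 𝕜) :
    expGenFun (fun n ↦ a n + b n) t = expGenFun a t + expGenFun b t := by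
  simpa only [expGenFun, smul_add] using
    (ha.summable_norm t).of_norm.tsum_add (hb.summable_norm t).of_norm

lemma expGenFun_map {F : Type*} [NormedAddCommGroup F] [NormedSpace 𝕜 F] {a : ℕ → E}
    (ha : HasGeometricGrowth a) (X : E →L[𝕜] F) (t : 𝕜) :
    expGenFun (fun n ↦ X (a n)) t = X (expGenFun a t) := by
  simpa only [expGenFun, map_smul] using (X.map_tsum (ha.summable_norm t).of_norm).symm

lemma hasDerivAt_expGenFun {a : ℕ → E} (ha : HasGeometricGrowth a) (t : 𝕜) :
    HasDerivAt (expGenFun a) (expGenFun (fun n ↦ a (n + 1)) t) t := by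
  have hterm (n : ℕ) (s : 𝕜) :
      HasDerivAt (fun s : 𝕜 ↦ (s ^ (n + 1) / ((n + 1)! : 𝕜)) • a (n + 1))
        ((s ^ n / (n ! : 𝕜)) • a (n + 1)) s := by
    convert ((hasDerivAt_pow (n + 1) s).div_const ((n + 1)! : 𝕜)).smul_const (a (n + 1)) using 2
    rw [Nat.factorial_succ, Nat.cast_mul, Nat.add_sub_cancel, mul_div_mul_left]
    exact Nat.cast_ne_zero.2 n.succ_ne_zero
  have hbound (n : ℕ) (s : 𝕜) (hs : s ∈ Metric.ball (0 : 𝕜) (‖t‖ + 1)) :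
      ‖(s ^ n / (n ! : 𝕜)) • a (n + 1)‖ ≤ (‖t‖ + 1) ^ n / n ! * ‖a (n + 1)‖ := by
    have : ‖s‖ ≤ ‖t‖ + 1 := (mem_ball_zero_iff.1 hs).le
    rw [norm_smul, norm_div, norm_pow, RCLike.norm_natCast]
    gcongr
  have hderiv := hasDerivAt_tsum_of_isPreconnected (y₀ := 0) (y := t)
    (ha.comp_succ.summable_pow_div_factorial_mul_norm (by positivity : 0 ≤ ‖t‖ + 1))
    Metric.isOpen_ball Metric.isPreconnected_ball (fun n s _ ↦ hterm n s) hbound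
    (Metric.mem_ball_self (by positivity)) (by simp) (by simp)
  rw [funext ha.expGenFun_eq_add_tsum]
  exact hderiv.const_add (a 0)

end HasGeometricGrowth

lemma hasDerivAt_expGenFun_inhomogeneousCoeff [CompleteSpace E] (X : E →L[𝕜] E) {a : ℕ → E}
    (ha : HasGeometricGrowth a) (t : 𝕜) :
    HasDerivAt (expGenFun (inhomogeneousCoeff X.toLinearMap a))
      (expGenFun a t + X (expGenFun (inhomogeneousCoeff X.toLinearMap a) t)) t := by
  have hc : HasGeometricGrowth (inhomogeneousCoeff X.toLinearMap a) :=
    .of_recurrence X ha fun _ ↦ rfl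
  have hXc : HasGeometricGrowth fun n ↦ X (inhomogeneousCoeff X.toLinearMap a n) := hc.map X
  rw [← hc.expGenFun_map, ← ha.expGenFun_add hXc]
  exact hc.hasDerivAt_expGenFun t

lemma expGenFun_binomialConvolution [CompleteSpace E] {F G : Type*}
    [NormedAddCommGroup F] [NormedSpace 𝕜 F] [CompleteSpace F]
    [NormedAddCommGroup G] [NormedSpace 𝕜 G] [CompleteSpace G] (B : E →L[𝕜] F →L[𝕜] G)
    {a : ℕ → E} {b : ℕ → F} (ha : HasGeometricGrowth a) (hb : HasGeometricGrowth b) (t : 𝕜) :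
    expGenFun (binomialConvolution B.toLinearMap₁₂ a b) t =
      B (expGenFun a t) (expGenFun b t) := by
  simp only [expGenFun]
  rw [apply₂_tsum_tsum_eq_tsum_sum_antidiagonal_of_summable_norm B (ha.summable_norm t)
    (hb.summable_norm t)]
  refine tsum_congr fun n ↦ ?_
  rw [binomialConvolution, smul_sum]
  refine sum_congr rfl fun ⟨i, j⟩ hij ↦ ?_
  obtain rfl : i + j = n := by simpa using hij
  have hcoeff : t ^ (i + j) / ((i + j)! : 𝕜) * ((i + j).choose i : 𝕜) =
      t ^ j / (j ! : 𝕜) * (t ^ i / (i ! : 𝕜)) := by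
    have hfact : ((i + j)! : 𝕜) ≠ 0 := Nat.cast_ne_zero.2 (i + j).factorial_ne_zero
    rw [Nat.cast_add_choose, pow_add]
    field_simp
  simp [smul_smul, hcoeff]

end ExpGenFun

lemma expv_smul_eq_expGenFun {M : Type*} [NormedAddCommGroup M] [NormedSpace ℝ M]
    (X : M →ₗ[ℝ] M) (t : ℝ) (m : M) : expv (t • X) m = expGenFun (fun n ↦ (X ^ n) m) t := by
  simp only [expv, expGenFun, smul_pow, LinearMap.smul_apply, smul_smul, div_eq_inv_mul]

lemma Eser_eq_expGenFun {g0 gm : Type*}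
    [NormedAddCommGroup g0] [NormedSpace ℝ g0] [NormedAddCommGroup gm] [NormedSpace ℝ gm]
    (X0 : g0 →ₗ[ℝ] g0) (X1 : gm →ₗ[ℝ] gm) (lX : g0 →ₗ[ℝ] g0 →ₗ[ℝ] gm) (t : ℝ) (x y : g0) :
    Eser X0 X1 lX t x y = expGenFun (inhomogeneousCoeff X1
      (binomialConvolution lX (fun n ↦ (X0 ^ n) x) (fun n ↦ (X0 ^ n) y))) t := by
  rw [expGenFun_eq_tsum_succ rfl, Eser]
  refine tsum_congr fun n ↦ congrArg _ ?_
  rw [inhomogeneousCoeff_succ_eq_sum, sum_antidiagonalTuple_three fun i j k ↦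
    ((i + j).choose i : ℝ) • (X1 ^ k) (lX ((X0 ^ i) x) ((X0 ^ j) y))]
  refine sum_congr rfl fun p _ ↦ ?_
  rw [binomialConvolution, map_sum]
  refine sum_congr rfl fun q hq ↦ ?_
  rw [HasAntidiagonal.mem_antidiagonal.1 hq, map_smul]

theorem Eser_hasDerivAt_general {g0 gm : Type*}
    [NormedAddCommGroup g0] [NormedSpace ℝ g0] [CompleteSpace g0]
    [NormedAddCommGroup gm] [NormedSpace ℝ gm] [CompleteSpace gm]
    (X0 : g0 →L[ℝ] g0) (X1 : gm →L[ℝ] gm) (lX : g0 →L[ℝ] g0 →L[ℝ] gm) (x y : g0) (t : ℝ) :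
    HasDerivAt (fun s : ℝ ↦ Eser X0.toLinearMap X1.toLinearMap lX.toLinearMap₁₂ s x y)
      (lX (expv (t • X0.toLinearMap) x) (expv (t • X0.toLinearMap) y) +
        X1 (Eser X0.toLinearMap X1.toLinearMap lX.toLinearMap₁₂ t x y)) t := by
  have hpow (v : g0) : HasGeometricGrowth fun n ↦ (X0.toLinearMap ^ n) v := by
    simpa only [← ContinuousLinearMap.toLinearMap_pow] using .pow_apply X0 v
  simp only [expv_smul_eq_expGenFun, Eser_eq_expGenFun]
  rw [← expGenFun_binomialConvolution lX (hpow x) (hpow y)]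
  exact hasDerivAt_expGenFun_inhomogeneousCoeff X1 (.binomialConvolution lX (hpow x) (hpow y)) t

/-- the series `E(t)(x,y)` satisfies the ODE
`d/dt E(t)(x,y) = l_X(exp(tX₀)x, exp(tX₀)y) + X₁(E(t)(x,y))`. -/
theorem Eser_hasDerivAt
    {g0 gm : Type*}
    [NormedAddCommGroup g0] [NormedSpace ℝ g0] [FiniteDimensional ℝ g0]
    [NormedAddCommGroup gm] [NormedSpace ℝ gm] [FiniteDimensional ℝ gm]
    (X0 : g0 →ₗ[ℝ] g0) (X1 : gm →ₗ[ℝ] gm) (lX : g0 →ₗ[ℝ] g0 →ₗ[ℝ] gm)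
    (x y : g0) (t : ℝ) :
    HasDerivAt (fun s : ℝ => Eser X0 X1 lX s x y)
      (lX (expv (t • X0) x) (expv (t • X0) y) + X1 (Eser X0 X1 lX t x y)) t := by
  exact Eser_hasDerivAt_general X0.toContinuousLinearMap X1.toContinuousLinearMap
    (LinearMap.toContinuousLinearMap (LinearMap.toContinuousLinearMap.toLinearMap ∘ₗ lX)) x y t
end
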